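/- Let u : ℝ^5 → ℝ be a positive C² solution of Δu = 15·u^{7/3} on all of ℝ^5 (geometer's sign convention: −∑∂²u/∂x_i² = −15u^{7/3} fails; i.e. ∑∂²u/∂x_i² = −15 u^{7/3}), with u(0) = 1 and u ≤ 1 everywhere. Then u(y) = (1 + |y|²)^{−3/2} for all y. -/

import Mathlib

open Real
open Filter Topology Set


abbrev CGSE := EuclideanSpace ℝ (Fin 5)

noncomputable def cgsE (i : Fin 5) : CGSE := EuclideanSpace.single i (1 : ℝ)

def Has2 (f : ℝ → ℝ) (s : ℝ) : Prop :=
  ∃ g : ℝ → ℝ, (∀ᶠ t in 𝓝 (0:ℝ), HasDerivAt f (g t) t) ∧ HasDerivAt g s 0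

lemma Has2.add {f g : ℝ → ℝ} {a b : ℝ} (hf : Has2 f a) (hg : Has2 g b) :
    Has2 (fun t => f t + g t) (a + b) := by
  obtain ⟨f', hf1, hf2⟩ := hf
  obtain ⟨g', hg1, hg2⟩ := hg
  refine ⟨fun t => f' t + g' t, ?_, hf2.add hg2⟩
  filter_upwards [hf1, hg1] with t h1 h2
  exact h1.add h2

lemma Has2.const_mul {f : ℝ → ℝ} {a : ℝ} (c : ℝ) (hf : Has2 f a) :
    Has2 (fun t => c * f t) (c * a) := by
  obtain ⟨f', hf1, hf2⟩ := hf
  refine ⟨fun t => c * f' t, ?_, hf2.const_mul c⟩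
  filter_upwards [hf1] with t h1
  exact h1.const_mul c

lemma Has2.mul {f g f' g' : ℝ → ℝ} {a b : ℝ}
    (hf1 : ∀ᶠ t in 𝓝 (0:ℝ), HasDerivAt f (f' t) t) (hf2 : HasDerivAt f' a 0)
    (hg1 : ∀ᶠ t in 𝓝 (0:ℝ), HasDerivAt g (g' t) t) (hg2 : HasDerivAt g' b 0) :
    Has2 (fun t => f t * g t) (a * g 0 + 2 * (f' 0 * g' 0) + f 0 * b) := by
  refine ⟨fun t => f' t * g t + f t * g' t, ?_, ?_⟩
  · filter_upwards [hf1, hg1] with t h1 h2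
    exact h1.mul h2
  · have := (hf2.mul hg1.self_of_nhds).add (hf1.self_of_nhds.mul hg2)
    refine HasDerivAt.congr_deriv this ?_
    ring

lemma Has2.nonneg_of_min {f : ℝ → ℝ} {s : ℝ} (hf : Has2 f s)
    (hm : IsLocalMin f 0) : 0 ≤ s := by
  obtain ⟨g, h1, h2⟩ := hf
  by_contra hs
  push Not at hs
  have g0 : g 0 = 0 := hm.hasDerivAt_eq_zero h1.self_of_nhds
  have hsl := h2.tendsto_slope
  have hev : ∀ᶠ t in 𝓝[≠] (0:ℝ), slope g 0 t < 0 := hsl.eventually (gt_mem_nhds hs)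
  rw [eventually_nhdsWithin_iff] at hev
  obtain ⟨δ, hδ, hb⟩ := Metric.eventually_nhds_iff.1 ((h1.and hev).and hm)
  have hneg : ∀ t, 0 < t → t < δ → g t < 0 := by
    intro t ht htd
    have := (hb (y := t) (by simpa [abs_of_pos ht] using htd)).1.2 (by simp [ht.ne'])
    rw [slope_def_field, g0] at this
    simp only [sub_zero] at this
    rcases div_neg_iff.1 this with h | h
    · linarith [h.2]
    · exact h.1
  have hd : ∀ t, 0 ≤ t → t < δ → HasDerivAt f (g t) t := fun t ht htd =>
    (hb (y := t) (by simpa [abs_of_nonneg ht] using htd)).1.1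
  obtain ⟨c, hc, hc'⟩ := exists_hasDerivAt_eq_slope f g (a := 0) (b := δ/2) (by linarith)
    (fun t ht => (hd t ht.1 (by linarith [ht.2])).continuousAt.continuousWithinAt)
    (fun t ht => hd t ht.1.le (by linarith [ht.2]))
  have hgc := hneg c hc.1 (by linarith [hc.2])
  have hmin : f 0 ≤ f (δ/2) :=
    (hb (y := δ/2) (by rw [Real.dist_eq, sub_zero, abs_of_pos] <;> linarith)).2
  rw [hc'] at hgc
  have : 0 ≤ (f (δ/2) - f 0) / (δ/2 - 0) := div_nonneg (by linarith) (by linarith)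
  linarith

def HasLap (f : CGSE → ℝ) (y : CGSE) (L : ℝ) : Prop :=
  ∃ s : Fin 5 → ℝ, (∀ i, Has2 (fun t => f (y + t • cgsE i)) (s i)) ∧ ∑ i, s i = L

lemma HasLap.add {f g : CGSE → ℝ} {y : CGSE} {a b : ℝ} (hf : HasLap f y a) (hg : HasLap g y b) :
    HasLap (fun z => f z + g z) y (a + b) := by
  obtain ⟨s, h1, h2⟩ := hf
  obtain ⟨r, h3, h4⟩ := hg
  exact ⟨fun i => s i + r i, fun i => (h1 i).add (h3 i), by rw [Finset.sum_add_distrib, h2, h4]⟩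

lemma HasLap.const_mul {f : CGSE → ℝ} {y : CGSE} {a : ℝ} (c : ℝ) (hf : HasLap f y a) :
    HasLap (fun z => c * f z) y (c * a) := by
  obtain ⟨s, h1, h2⟩ := hf
  exact ⟨fun i => c * s i, fun i => (h1 i).const_mul c, by rw [← Finset.mul_sum, h2]⟩

lemma HasLap.sub {f g : CGSE → ℝ} {y : CGSE} {a b : ℝ} (hf : HasLap f y a) (hg : HasLap g y b) :
    HasLap (fun z => f z - g z) y (a - b) := by
  have := hf.add (hg.const_mul (-1))
  convert this using 1
  · funext z; ring
  · ring

lemma HasLap.translate {f : CGSE → ℝ} {y p : CGSE} {a : ℝ} (hf : HasLap f (y - p) a) :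
    HasLap (fun z => f (z - p)) y a := by
  obtain ⟨s, h1, h2⟩ := hf
  refine ⟨s, fun i => ?_, h2⟩
  convert h1 i using 4
  abel

lemma hasLap_const (c : ℝ) (y : CGSE) : HasLap (fun _ => c) y 0 :=
  ⟨fun _ => 0, fun _ => ⟨fun _ => 0, Eventually.of_forall fun t => hasDerivAt_const t c,
    hasDerivAt_const 0 0⟩, by simp⟩

lemma HasLap.nonneg_of_min {f : CGSE → ℝ} {y : CGSE} {L : ℝ} (hf : HasLap f y L)
    (hm : IsLocalMin f y) : 0 ≤ L := by
  obtain ⟨s, h1, rfl⟩ := hf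
  refine Finset.sum_nonneg fun i _ => (h1 i).nonneg_of_min ?_
  have hc : ContinuousAt (fun t : ℝ => y + t • cgsE i) 0 := by fun_prop
  have : Tendsto (fun t : ℝ => y + t • cgsE i) (𝓝 0) (𝓝 y) := by
    simpa [ContinuousAt] using hc
  have h := this.eventually hm
  filter_upwards [h] with t ht
  simpa using ht

lemma cgs_norm_line (y : CGSE) (i : Fin 5) (t : ℝ) :
    ‖y + t • cgsE i‖ ^ 2 = ‖y‖ ^ 2 + 2 * t * y i + t ^ 2 := by
  rw [norm_add_sq_real, norm_smul, inner_smul_right]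
  simp [cgsE, EuclideanSpace.inner_single_right]
  ring

lemma cgs_norm_sq (y : CGSE) : ∑ i, y i ^ 2 = ‖y‖ ^ 2 := by
  rw [EuclideanSpace.norm_sq_eq]; simp

lemma cgs_sum (y : CGSE) : ∑ i, y i • cgsE i = y := by
  ext j
  fin_cases j <;> simp [cgsE, Fin.sum_univ_five]

lemma hasLap_norm_sq (y : CGSE) : HasLap (fun z => ‖z‖ ^ 2) y 10 := by
  refine ⟨fun _ => 2, fun i => ?_, by norm_num⟩
  simp only [cgs_norm_line]
  refine ⟨fun t => 2 * y i + 2 * t, Eventually.of_forall fun t => ?_, ?_⟩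
  · have := (((hasDerivAt_id t).const_mul 2).mul_const (y i)).const_add (‖y‖^2) |>.add
      ((hasDerivAt_id t).pow 2)
    refine HasDerivAt.congr_deriv this ?_
    simp
  · simpa using ((hasDerivAt_id (0:ℝ)).const_mul 2).const_add (2 * y i)

lemma cgs_norm_deriv (y : CGSE) (i : Fin 5) (t : ℝ) (h : y + t • cgsE i ≠ 0) :
    HasDerivAt (fun t => ‖y + t • cgsE i‖) ((y i + t) * ‖y + t • cgsE i‖⁻¹) t := by
  have h1 : HasDerivAt (fun t => ‖y + t • cgsE i‖ ^ 2) (2 * y i + 2 * t) t := by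
    simp only [cgs_norm_line]
    have := (((hasDerivAt_id t).const_mul 2).mul_const (y i)).const_add (‖y‖^2) |>.add
      ((hasDerivAt_id t).pow 2)
    refine HasDerivAt.congr_deriv this ?_
    simp
  have h0 : ‖y + t • cgsE i‖ ≠ 0 := norm_ne_zero_iff.2 h
  have h2 := h1.sqrt (by positivity)
  simp only [Real.sqrt_sq (norm_nonneg _)] at h2
  convert h2 using 1
  field_simp

set_option maxHeartbeats 1000000 in
lemma kelvin_lap {u : CGSE → ℝ} (hu : ContDiff ℝ 2 u) (μ : ℝ) (y : CGSE) (hy : y ≠ 0) :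
    HasLap (fun z => (‖z‖⁻¹) ^ 3 * u ((μ * (‖z‖⁻¹) ^ 2) • z)) y
      ((‖y‖⁻¹) ^ 7 * μ ^ 2 * ∑ i, fderiv ℝ (fderiv ℝ u) ((μ * (‖y‖⁻¹) ^ 2) • y) (cgsE i) (cgsE i)) := by
  have hd1 : Differentiable ℝ u := hu.differentiable (by norm_num)
  have hd2 : Differentiable ℝ (fderiv ℝ u) :=
    (hu.fderiv_right (m := 1) (by norm_num)).differentiable (by norm_num)
  set a := (μ * (‖y‖⁻¹) ^ 2) • y with ha
  set ρ := ‖y‖⁻¹ with hρ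
  have hρ0 : ‖y‖ ≠ 0 := norm_ne_zero_iff.2 hy
  set D := fderiv ℝ u a with hD
  set H := fderiv ℝ (fderiv ℝ u) a with hH
  have key : ∀ i, Has2 (fun t => (‖y + t • cgsE i‖⁻¹) ^ 3 *
      u ((μ * (‖y + t • cgsE i‖⁻¹) ^ 2) • (y + t • cgsE i)))
      ((15 * y i ^ 2 * ρ ^ 7 - 3 * ρ ^ 5) * u a
        + 2 * ((-3 * y i * ρ ^ 5) * (μ * (ρ ^ 2 * D (cgsE i) - 2 * y i * ρ ^ 4 * D y)))
        + ρ ^ 3 * (μ ^ 2 * (ρ ^ 4 * H (cgsE i) (cgsE i) - 2 * y i * ρ ^ 6 * H (cgsE i) y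
            - 2 * y i * ρ ^ 6 * H y (cgsE i) + 4 * y i ^ 2 * ρ ^ 8 * H y y)
          + μ * (-4 * y i * ρ ^ 4 * D (cgsE i) - 2 * ρ ^ 4 * D y + 8 * y i ^ 2 * ρ ^ 6 * D y))) := by
    intro i
    have hne : ∀ᶠ t in 𝓝 (0:ℝ), y + t • cgsE i ≠ 0 := by
      have hc : ContinuousAt (fun t : ℝ => y + t • cgsE i) 0 := by fun_prop
      exact hc.eventually_ne (by simpa using hy)
    have hinv : ∀ t, y + t • cgsE i ≠ 0 → HasDerivAt (fun t => ‖y + t • cgsE i‖⁻¹)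
        (-(y i + t) * (‖y + t • cgsE i‖⁻¹) ^ 3) t := by
      intro t ht
      have h0 : ‖y + t • cgsE i‖ ≠ 0 := norm_ne_zero_iff.2 ht
      refine HasDerivAt.congr_deriv ((cgs_norm_deriv y i t ht).inv h0) ?_
      field_simp
    have hpow : ∀ (n : ℕ) (t : ℝ), y + t • cgsE i ≠ 0 →
        HasDerivAt (fun t => (‖y + t • cgsE i‖⁻¹) ^ (n + 1))
        (-(n + 1) * (y i + t) * (‖y + t • cgsE i‖⁻¹) ^ (n + 3)) t := by
      intro n t ht
      refine HasDerivAt.congr_deriv ((hinv t ht).pow (n + 1)) ?_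
      push_cast
      ring
    have hline : ∀ t, HasDerivAt (fun t : ℝ => y + t • cgsE i) (cgsE i) t := by
      intro t
      simpa using ((hasDerivAt_id t).smul_const (cgsE i)).const_add y
    have hlin : ∀ t, HasDerivAt (fun t : ℝ => y i + t) 1 t := fun t => by
      simpa using (hasDerivAt_id t).const_add (y i)
    have hphi : ∀ t, y + t • cgsE i ≠ 0 →
        HasDerivAt (fun t => (μ * (‖y + t • cgsE i‖⁻¹) ^ 2) • (y + t • cgsE i))
        ((μ * (‖y + t • cgsE i‖⁻¹) ^ 2) • cgsE i +
          (-2 * μ * (y i + t) * (‖y + t • cgsE i‖⁻¹) ^ 4) • (y + t • cgsE i)) t := by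
      intro t ht
      have := ((hpow 1 t ht).const_mul μ).smul (hline t)
      refine HasDerivAt.congr_deriv this ?_
      push_cast
      module
    have hy0 : y + (0:ℝ) • cgsE i ≠ 0 := by simpa using hy
    have e0 : y + (0:ℝ) • cgsE i = y := by simp
    have hphi2 : HasDerivAt (fun t => (μ * (‖y + t • cgsE i‖⁻¹) ^ 2) • cgsE i +
          (-2 * μ * (y i + t) * (‖y + t • cgsE i‖⁻¹) ^ 4) • (y + t • cgsE i))
          ((-4 * μ * y i * ρ ^ 4) • cgsE i + (-2 * μ * ρ ^ 4 + 8 * μ * y i ^ 2 * ρ ^ 6) • y) 0 := by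
      have h1 := ((hpow 1 0 hy0).const_mul μ).smul_const (cgsE i)
      have h2 := ((((hlin 0).const_mul (-2 * μ)).mul (hpow 3 0 hy0))).smul (hline 0)
      refine HasDerivAt.congr_deriv (h1.add h2) ?_
      simp only [e0, ← hρ, add_zero, Pi.mul_apply]
      push_cast
      module
    have hG1 : ∀ t, y + t • cgsE i ≠ 0 →
        HasDerivAt (fun t => u ((μ * (‖y + t • cgsE i‖⁻¹) ^ 2) • (y + t • cgsE i)))
        (fderiv ℝ u ((μ * (‖y + t • cgsE i‖⁻¹) ^ 2) • (y + t • cgsE i))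
        ((μ * (‖y + t • cgsE i‖⁻¹) ^ 2) • cgsE i +
          (-2 * μ * (y i + t) * (‖y + t • cgsE i‖⁻¹) ^ 4) • (y + t • cgsE i))) t := by
      intro t ht
      exact (hd1 _).hasFDerivAt.comp_hasDerivAt t (hphi t ht)
    have hphi0 := hphi 0 hy0
    have hF : HasFDerivAt (fderiv ℝ u) H
        ((μ * (‖y + (0:ℝ) • cgsE i‖⁻¹) ^ 2) • (y + (0:ℝ) • cgsE i)) := by
      rw [e0]; exact (hd2 a).hasFDerivAt
    have hcomp : HasDerivAt (fun t : ℝ => fderiv ℝ u ((μ * (‖y + t • cgsE i‖⁻¹) ^ 2) • (y + t • cgsE i)))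
        _ (0:ℝ) := hF.comp_hasDerivAt (0:ℝ) hphi0
    have hG2 := hcomp.clm_apply hphi2
    have hN2 := (((hlin 0).const_mul (-3)).mul (hpow 4 0 hy0))
    have := Has2.mul (f := fun t => (‖y + t • cgsE i‖⁻¹) ^ 3)
      (f' := fun t => -3 * (y i + t) * (‖y + t • cgsE i‖⁻¹) ^ 5)
      (hne.mono fun t ht => by
        refine HasDerivAt.congr_deriv (hpow 2 t ht) ?_
        push_cast; ring) hN2 (hne.mono hG1) hG2
    convert this using 1
    simp only [e0, ← hρ, add_zero, ← ha, ← hD]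
    simp only [map_add, map_smul, smul_eq_mul, add_apply, smul_apply]
    push_cast
    ring
  refine ⟨_, key, ?_⟩
  have s1 : ∑ i, y i ^ 2 = ‖y‖ ^ 2 := cgs_norm_sq y
  have s2 : ∑ i, y i * D (cgsE i) = D y := by
    conv_rhs => rw [← cgs_sum y]
    simp
  have s3 : ∑ i, y i * H (cgsE i) y = H y y := by
    have : H y y = H (∑ i, y i • cgsE i) y := by rw [cgs_sum]
    rw [this]
    simp
  have s4 : ∑ i, y i * H y (cgsE i) = H y y := by
    have : H y y = H y (∑ i, y i • cgsE i) := by rw [cgs_sum]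
    rw [this]
    simp
  have s1' : ρ ^ 2 * ∑ i, y i ^ 2 = 1 := by rw [s1, hρ]; field_simp
  rw [Fin.sum_univ_five] at *
  simp only [Fin.sum_univ_five] at *
  linear_combination (15 * ρ ^ 5 * u a + 20 * μ * ρ ^ 7 * D y + 4 * μ ^ 2 * ρ ^ 9 * H y y ) * s1' + (-10 * μ * ρ ^ 7) * s2 - 2 * μ ^ 2 * ρ ^ 9 * s3 - 2 * μ ^ 2 * ρ ^ 9 * s4

lemma hasLap_of_contDiff {u : CGSE → ℝ} (hu : ContDiff ℝ 2 u) (y : CGSE) :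
    HasLap u y (∑ i, fderiv ℝ (fderiv ℝ u) y (cgsE i) (cgsE i)) := by
  have hd1 : Differentiable ℝ u := hu.differentiable (by norm_num)
  have hd2 : Differentiable ℝ (fderiv ℝ u) :=
    (hu.fderiv_right (m := 1) (by norm_num)).differentiable (by norm_num)
  refine ⟨_, fun i => ?_, rfl⟩
  have hline : ∀ t, HasDerivAt (fun t : ℝ => y + t • cgsE i) (cgsE i) t := by
    intro t
    simpa using ((hasDerivAt_id t).smul_const (cgsE i)).const_add y
  refine ⟨fun t => fderiv ℝ u (y + t • cgsE i) (cgsE i), Eventually.of_forall fun t =>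
    (hd1 _).hasFDerivAt.comp_hasDerivAt t (hline t), ?_⟩
  have h0 : HasFDerivAt (fderiv ℝ u) (fderiv ℝ (fderiv ℝ u) y) (y + (0:ℝ) • cgsE i) := by
    simpa using (hd2 y).hasFDerivAt
  have hcomp : HasDerivAt (fun t : ℝ => fderiv ℝ u (y + t • cgsE i))
    (fderiv ℝ (fderiv ℝ u) y (cgsE i)) (0:ℝ) := h0.comp_hasDerivAt (0:ℝ) (hline 0)
  have := hcomp.clm_apply (hasDerivAt_const (0:ℝ) (cgsE i))
  refine HasDerivAt.congr_deriv this ?_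
  simp

lemma hasLap_fund {y : CGSE} (hy : y ≠ 0) : HasLap (fun z => (‖z‖⁻¹) ^ 3) y 0 := by
  have := kelvin_lap (u := fun _ => (1:ℝ)) contDiff_const 1 y hy
  simpa using this

lemma max_principle {K : Set CGSE} (hK : IsCompact K) {f : CGSE → ℝ} (hf : ContinuousOn f K)
    (h : ∀ y ∈ K, 0 ≤ f y ∨ (K ∈ 𝓝 y ∧ ∃ L ≤ 0, HasLap f y L)) : ∀ y ∈ K, 0 ≤ f y := by
  intro y hy
  obtain ⟨C, hC⟩ := hK.isBounded.exists_norm_le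
  have hC' : ∀ x ∈ K, ‖x‖ ^ 2 ≤ C ^ 2 := fun x hx =>
    pow_le_pow_left₀ (norm_nonneg _) (hC x hx) 2
  have key : ∀ ε > 0, -(ε * C ^ 2) ≤ f y := by
    intro ε hε
    obtain ⟨x, hx, hmin⟩ := hK.exists_isMinOn ⟨y, hy⟩
      (f := fun z => f z - ε * ‖z‖ ^ 2) (hf.sub (by fun_prop))
    have hfx : 0 ≤ f x := by
      rcases h x hx with h | ⟨hn, L, hL, hlap⟩
      · exact h
      · have h1 := hlap.sub ((hasLap_norm_sq x).const_mul ε)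
        have := h1.nonneg_of_min (hmin.isLocalMin hn)
        nlinarith
    have h2 : f x - ε * ‖x‖ ^ 2 ≤ f y - ε * ‖y‖ ^ 2 := hmin hy
    have h3 := mul_le_mul_of_nonneg_left (hC' x hx) hε.le
    have h4 : 0 ≤ ε * ‖y‖ ^ 2 := by positivity
    linarith
  by_contra hn
  push Not at hn
  have := key (-(f y) / (2 * (C ^ 2 + 1))) (by
    apply div_pos <;> nlinarith [sq_nonneg C])
  have h5 : -(f y) / (2 * (C ^ 2 + 1)) * C ^ 2 ≤ -(f y) / 2 := by
    rw [div_mul_eq_mul_div, div_le_div_iff₀ (by positivity) (by norm_num)]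
    nlinarith [sq_nonneg C]
  linarith

lemma annulus_cmp {p : CGSE} {a b : ℝ} (ha : 0 < a) {w : CGSE → ℝ} {α β : ℝ}
    (hc : ContinuousOn w {y | a ≤ ‖y - p‖ ∧ ‖y - p‖ ≤ b})
    (hl : ∀ y, a < ‖y - p‖ → ‖y - p‖ < b → ∃ L ≤ 0, HasLap w y L)
    (h1 : ∀ y, ‖y - p‖ = a → α * (a⁻¹) ^ 3 + β ≤ w y)
    (h2 : ∀ y, ‖y - p‖ = b → α * (b⁻¹) ^ 3 + β ≤ w y) :
    ∀ y, a ≤ ‖y - p‖ → ‖y - p‖ ≤ b → α * (‖y - p‖⁻¹) ^ 3 + β ≤ w y := by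
  intro y hya hyb
  set K := {y : CGSE | a ≤ ‖y - p‖ ∧ ‖y - p‖ ≤ b} with hKd
  have hK : IsCompact K := by
    apply (isCompact_closedBall p b).of_isClosed_subset
    · have hn : Continuous fun z : CGSE => ‖z - p‖ := by fun_prop
      exact (isClosed_le continuous_const hn).inter (isClosed_le hn continuous_const)
    · intro z hz
      simpa [dist_eq_norm] using hz.2
  have := max_principle hK (f := fun z => w z - (α * (‖z - p‖⁻¹) ^ 3 + β)) ?_ ?_ y ⟨hya, hyb⟩
  · linarith
  · refine hc.sub ?_
    refine ContinuousOn.add (ContinuousOn.mul continuousOn_const (ContinuousOn.pow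
      (ContinuousOn.inv₀ (by fun_prop) ?_) 3)) continuousOn_const
    intro z hz
    exact (lt_of_lt_of_le ha hz.1).ne'
  · intro z hz
    rcases eq_or_lt_of_le hz.1 with h | h
    · left
      have := h1 z h.symm
      rw [← h]; linarith
    rcases eq_or_lt_of_le hz.2 with h' | h'
    · left
      have := h2 z h'
      rw [h']; linarith
    right
    constructor
    · apply Filter.mem_of_superset (((isOpen_lt continuous_const
        (by fun_prop : Continuous fun z : CGSE => ‖z - p‖)).inter
        (isOpen_lt (by fun_prop : Continuous fun z : CGSE => ‖z - p‖) continuous_const)).mem_nhds ⟨h, h'⟩)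
      intro x hx
      exact ⟨le_of_lt hx.1, le_of_lt hx.2⟩
    · obtain ⟨L, hL, hlap⟩ := hl z h h'
      have hz0 : z - p ≠ 0 := norm_ne_zero_iff.1 (ha.trans h).ne'
      have hb := ((hasLap_fund hz0).translate.const_mul α).add (hasLap_const β z)
      exact ⟨_, by simpa using hL, hlap.sub hb⟩

/-- lower bound at infinity -/
lemma exterior_lower {r m : ℝ} (hr : 0 < r) (hm : 0 ≤ m) {w : CGSE → ℝ}
    (hc : ContinuousOn w {y | r ≤ ‖y‖})
    (hl : ∀ y, r < ‖y‖ → ∃ L ≤ 0, HasLap w y L)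
    (h0 : ∀ y, r ≤ ‖y‖ → 0 ≤ w y)
    (h1 : ∀ y, ‖y‖ = r → m ≤ w y) :
    ∀ y, r ≤ ‖y‖ → m * r ^ 3 * (‖y‖⁻¹) ^ 3 ≤ w y := by
  intro y hy
  have key : ∀ R, ‖y‖ ≤ R → m * r ^ 3 * (‖y‖⁻¹) ^ 3 - m * r ^ 3 * (R⁻¹) ^ 3 ≤ w y := by
    intro R hR
    have := annulus_cmp (p := 0) (a := r) (b := R) hr (w := w) (α := m * r ^ 3)
      (β := - (m * r ^ 3 * (R⁻¹) ^ 3))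
      (hc.mono fun z hz => by simpa using hz.1)
      (fun z hz _ => hl z (by simpa using hz))
      (fun z hz => by
        rw [sub_zero] at hz
        have h2 := h1 z hz
        have h3 : m * r ^ 3 * (r⁻¹) ^ 3 = m := by field_simp
        have h4 : 0 ≤ m * r ^ 3 * (R⁻¹) ^ 3 := by
          have : 0 ≤ R := (norm_nonneg y).trans hR
          positivity
        linarith)
      (fun z hz => by
        rw [sub_zero] at hz
        have := h0 z (by rw [hz]; exact hy.trans hR)
        linarith) y (by simpa using hy) (by simpa using hR)
    simp only [sub_zero] at this
    linarith
  have ht : Tendsto (fun R : ℝ => m * r ^ 3 * (‖y‖⁻¹) ^ 3 - m * r ^ 3 * (R⁻¹) ^ 3) atTop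
      (𝓝 (m * r ^ 3 * (‖y‖⁻¹) ^ 3 - m * r ^ 3 * 0 ^ 3)) :=
    ((tendsto_inv_atTop_zero.pow 3).const_mul _).const_sub _
  have := le_of_tendsto ht (eventually_atTop.2 ⟨‖y‖, key⟩)
  linarith

/-- spreading of positivity -/
lemma ball_pos {p : CGSE} {R : ℝ} {w : CGSE → ℝ}
    (hc : ContinuousOn w (Metric.closedBall p R))
    (hl : ∀ y, ‖y - p‖ < R → ∃ L ≤ 0, HasLap w y L)
    (h0 : ∀ y, ‖y - p‖ ≤ R → 0 ≤ w y) (hp : 0 < w p) :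
    ∀ y, ‖y - p‖ < R → 0 < w y := by
  intro y hy
  have hR : 0 < R := (norm_nonneg _).trans_lt hy
  have hcp : ContinuousAt w p := hc.continuousAt (Metric.closedBall_mem_nhds p hR)
  obtain ⟨δ, hδ, hb⟩ := Metric.eventually_nhds_iff.1 (hcp.eventually (lt_mem_nhds (half_lt_self hp)))
  by_cases hyd : ‖y - p‖ < δ
  · exact lt_trans (half_pos hp) (hb (by simpa [dist_eq_norm] using hyd))
  push Not at hyd
  set a := δ / 2 with hadef
  have ha : 0 < a := half_pos hδ
  have haR : a < R := by linarith
  have := annulus_cmp (p := p) (a := a) (b := R) ha (w := w) (α := w p / 2 * a ^ 3)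
      (β := - (w p / 2 * a ^ 3 * (R⁻¹) ^ 3))
      (hc.mono fun z hz => by simpa [dist_eq_norm] using hz.2)
      (fun z _ hz => hl z hz)
      (fun z hz => by
        have h2 := hb (y := z) (by rw [dist_eq_norm, hz]; linarith)
        have h3 : w p / 2 * a ^ 3 * (a⁻¹) ^ 3 = w p / 2 := by field_simp
        have h4 : 0 ≤ w p / 2 * a ^ 3 * (R⁻¹) ^ 3 := by positivity
        linarith)
      (fun z hz => by
        have := h0 z hz.le
        linarith) y (by linarith) hy.le
  have hy0 : 0 < ‖y - p‖ := lt_of_lt_of_le hδ hyd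
  have h5 : (R⁻¹) ^ 3 < (‖y - p‖⁻¹) ^ 3 := by
    gcongr
  have h6 : 0 < w p / 2 * a ^ 3 := by positivity
  nlinarith

lemma exterior_connected {r : ℝ} (hr : 0 ≤ r) : IsPreconnected {y : CGSE | r < ‖y‖} := by
  have h1 : IsPreconnected ({0}ᶜ : Set CGSE) := by
    apply (isConnected_compl_singleton_of_one_lt_rank _ 0).isPreconnected
    rw [← Module.finrank_eq_rank]
    simp
  have h2 := h1.image (fun y => ((r + ‖y‖) * ‖y‖⁻¹) • y) (by
    refine ContinuousOn.smul (ContinuousOn.mul (continuous_const.add continuous_norm).continuousOn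
      (ContinuousOn.inv₀ continuous_norm.continuousOn ?_)) continuousOn_id
    intro x hx
    exact norm_ne_zero_iff.2 hx)
  convert h2 using 1
  ext z
  simp only [mem_ofPred_eq, mem_image, mem_compl_iff, mem_singleton_iff]
  constructor
  · intro hz
    have hz0 : 0 < ‖z‖ := hr.trans_lt hz
    have h3 : 0 < (‖z‖ - r) * ‖z‖⁻¹ := mul_pos (by linarith) (by positivity)
    refine ⟨((‖z‖ - r) * ‖z‖⁻¹) • z, ?_, ?_⟩
    · simp only [smul_eq_zero, not_or]
      exact ⟨h3.ne', norm_ne_zero_iff.1 hz0.ne'⟩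
    · have h4 : ‖((‖z‖ - r) * ‖z‖⁻¹) • z‖ = ‖z‖ - r := by
        rw [norm_smul, Real.norm_eq_abs, abs_of_pos h3]
        field_simp
      rw [h4, smul_smul]
      have h5 : (r + (‖z‖ - r)) * (‖z‖ - r)⁻¹ * ((‖z‖ - r) * ‖z‖⁻¹) = 1 := by
        have : ‖z‖ - r ≠ 0 := by linarith
        field_simp
        ring
      rw [h5, one_smul]
  · rintro ⟨x, hx, rfl⟩
    have hx0 : 0 < ‖x‖ := norm_pos_iff.2 hx
    rw [norm_smul, Real.norm_eq_abs, abs_of_pos (by positivity)]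
    have : (r + ‖x‖) * ‖x‖⁻¹ * ‖x‖ = r + ‖x‖ := by field_simp
    linarith

lemma strong_max {r : ℝ} (hr : 0 < r) {w : CGSE → ℝ}
    (hc : ContinuousOn w {y | r < ‖y‖})
    (hl : ∀ y, r < ‖y‖ → ∃ L ≤ 0, HasLap w y L)
    (h0 : ∀ y, r < ‖y‖ → 0 ≤ w y) :
    (∀ y, r < ‖y‖ → w y = 0) ∨ (∀ y, r < ‖y‖ → 0 < w y) := by
  by_contra hcon
  push Not at hcon
  obtain ⟨⟨a, ha, ha'⟩, b, hb, hb'⟩ := hcon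
  have hopen : IsOpen {y : CGSE | r < ‖y‖} := isOpen_lt continuous_const continuous_norm
  have hconn := exterior_connected hr.le
  have hU : IsOpen ({y : CGSE | r < ‖y‖} ∩ w ⁻¹' Ioi 0) := hc.isOpen_inter_preimage hopen isOpen_Ioi
  -- the zero set is open as well
  have hV : IsOpen {y : CGSE | r < ‖y‖ ∧ w y = 0} := by
    rw [Metric.isOpen_iff]
    rintro q ⟨hq, hq0⟩
    refine ⟨(‖q‖ - r) / 4, by linarith, ?_⟩
    intro z hz
    rw [Metric.mem_ball, dist_eq_norm] at hz
    have far : ∀ x, ‖x - z‖ ≤ (‖q‖ - r) / 2 → r < ‖x‖ := by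
      intro x hx
      have h1 : ‖q‖ ≤ ‖x‖ + ‖x - z‖ + ‖z - q‖ := by
        calc ‖q‖ = ‖x - (x - z) - (z - q)‖ := by congr 1; abel
          _ ≤ ‖x - (x - z)‖ + ‖z - q‖ := norm_sub_le _ _
          _ ≤ _ := by gcongr; exact norm_sub_le _ _
      linarith
    have hzr : r < ‖z‖ := far z (by simp; linarith)
    refine ⟨hzr, ?_⟩
    by_contra hne
    have hpos : 0 < w z := lt_of_le_of_ne (h0 z hzr) (Ne.symm hne)
    have := ball_pos (p := z) (R := (‖q‖ - r) / 2) (w := w)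
      (hc.mono fun x hx => far x (by simpa [dist_eq_norm] using hx))
      (fun x hx => hl x (far x hx.le)) (fun x hx => h0 x (far x hx)) hpos q
      (by rw [norm_sub_rev]; linarith)
    linarith
  obtain ⟨z, _, hz1, hz2⟩ := hconn _ _ hU hV (fun y hy => by
      rcases eq_or_lt_of_le (h0 y hy) with h | h
      · exact Or.inr ⟨hy, h.symm⟩
      · exact Or.inl ⟨hy, h⟩)
    ⟨a, ha, ha, lt_of_le_of_ne (h0 a ha) (Ne.symm ha')⟩
    ⟨b, hb, hb, le_antisymm hb' (h0 b hb)⟩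
  have : 0 < w z := hz1.2
  linarith [hz2.2]

structure CGSSol (v : CGSE → ℝ) : Prop where
  c2 : ContDiff ℝ 2 v
  pos : ∀ y, 0 < v y
  pde : ∀ y, ∑ i, fderiv ℝ (fderiv ℝ v) y (cgsE i) (cgsE i) = -(15 * v y ^ ((7:ℝ) / 3))
  le1 : ∀ y, v y ≤ 1

noncomputable def Kel (v : CGSE → ℝ) (l : ℝ) (y : CGSE) : ℝ :=
  l ^ 3 * ((‖y‖⁻¹) ^ 3 * v ((l ^ 2 * (‖y‖⁻¹) ^ 2) • y))

lemma CGSSol.diff {v : CGSE → ℝ} (hv : CGSSol v) : Differentiable ℝ v :=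
  hv.c2.differentiable (by norm_num)

lemma CGSSol.cont {v : CGSE → ℝ} (hv : CGSSol v) : Continuous v := hv.c2.continuous

lemma CGSSol.contD {v : CGSE → ℝ} (hv : CGSSol v) : Continuous (fderiv ℝ v) :=
  hv.c2.continuous_fderiv (by norm_num)

lemma CGSSol.lap {v : CGSE → ℝ} (hv : CGSSol v) (y : CGSE) :
    HasLap v y (-(15 * v y ^ ((7:ℝ) / 3))) := by
  rw [← hv.pde y]
  exact hasLap_of_contDiff hv.c2 y

lemma Kel_pos {v : CGSE → ℝ} (hv : CGSSol v) {l : ℝ} (hl : 0 < l) {y : CGSE} (hy : y ≠ 0) :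
    0 < Kel v l y := by
  have := hv.pos ((l ^ 2 * (‖y‖⁻¹) ^ 2) • y)
  have : 0 < ‖y‖ := norm_pos_iff.2 hy
  unfold Kel
  positivity

lemma Kel_lap {v : CGSE → ℝ} (hv : CGSSol v) {l : ℝ} (hl : 0 < l) {y : CGSE} (hy : y ≠ 0) :
    HasLap (Kel v l) y (-(15 * Kel v l y ^ ((7:ℝ) / 3))) := by
  have h := (kelvin_lap hv.c2 (l ^ 2) y hy).const_mul (l ^ 3)
  rw [hv.pde] at h
  have hp := hv.pos ((l ^ 2 * (‖y‖⁻¹) ^ 2) • y)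
  have hn : 0 < ‖y‖ := norm_pos_iff.2 hy
  have e : Kel v l y ^ ((7:ℝ) / 3) =
      (l * ‖y‖⁻¹) ^ 7 * v ((l ^ 2 * (‖y‖⁻¹) ^ 2) • y) ^ ((7:ℝ) / 3) := by
    have : Kel v l y = (l * ‖y‖⁻¹) ^ 3 * v ((l ^ 2 * (‖y‖⁻¹) ^ 2) • y) := by unfold Kel; ring
    rw [this, Real.mul_rpow (by positivity) hp.le]
    congr 1
    rw [← Real.rpow_natCast, ← Real.rpow_mul (by positivity), ← Real.rpow_natCast]
    norm_num
  rw [e]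
  have e2 : l ^ 3 * (‖y‖⁻¹ ^ 7 * (l ^ 2) ^ 2 * -(15 * v ((l ^ 2 * ‖y‖⁻¹ ^ 2) • y) ^ ((7:ℝ) / 3)))
    = -(15 * ((l * ‖y‖⁻¹) ^ 7 * v ((l ^ 2 * ‖y‖⁻¹ ^ 2) • y) ^ ((7:ℝ) / 3))) := by ring
  rw [e2] at h
  exact h

lemma Kel_contAt {v : CGSE → ℝ} (hv : CGSSol v) (l : ℝ) {y : CGSE} (hy : y ≠ 0) :
    ContinuousAt (fun z : ℝ × CGSE => Kel v z.1 z.2) (l, y) := by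
  have hn : ‖y‖ ≠ 0 := norm_ne_zero_iff.2 hy
  have hi : ContinuousAt (fun z : ℝ × CGSE => ‖z.2‖⁻¹) (l, y) :=
    ContinuousAt.inv₀ (by fun_prop) hn
  have h2 : ContinuousAt (fun z : ℝ × CGSE => (z.1 ^ 2 * (‖z.2‖⁻¹) ^ 2) • z.2) (l, y) :=
    ((continuousAt_fst.pow 2).mul (hi.pow 2)).smul continuousAt_snd
  exact (continuousAt_fst.pow 3).mul ((hi.pow 3).mul
    (ContinuousAt.comp (f := fun z : ℝ × CGSE => (z.1 ^ 2 * (‖z.2‖⁻¹) ^ 2) • z.2) (g := v) hv.cont.continuousAt h2))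

lemma Kel_contAt' {v : CGSE → ℝ} (hv : CGSSol v) (l : ℝ) {y : CGSE} (hy : y ≠ 0) :
    ContinuousAt (Kel v l) y :=
  ContinuousAt.comp (f := fun z : CGSE => (l, z)) (g := fun z : ℝ × CGSE => Kel v z.1 z.2)
    (Kel_contAt hv l hy) (by fun_prop)

lemma Kel_mono {v : CGSE → ℝ} (hv : CGSSol v) {l : ℝ} (hl : 0 < l) {y : CGSE} (hy : l ≤ ‖y‖)
    (h : ∀ t, l ^ 2 * (‖y‖⁻¹) ^ 2 ≤ t → t ≤ 1 → 0 ≤ 3 * v (t • y) + 2 * fderiv ℝ v (t • y) (t • y)) :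
    Kel v l y ≤ v y := by
  have hn : 0 < ‖y‖ := hl.trans_le hy
  set τ := l ^ 2 * (‖y‖⁻¹) ^ 2 with hτ
  have hτ0 : 0 < τ := by positivity
  have hs : l * ‖y‖⁻¹ ≤ 1 := by
    rw [← div_eq_mul_inv]; exact (div_le_one hn).2 hy
  have hτ1 : τ ≤ 1 := by
    have : τ = (l * ‖y‖⁻¹) ^ 2 := by rw [hτ]; ring
    rw [this]
    exact pow_le_one₀ (by positivity) hs
  have hd : ∀ t : ℝ, HasDerivAt (fun t : ℝ => t ^ 3 * v (t • y) ^ 2)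
      (t ^ 2 * v (t • y) * (3 * v (t • y) + 2 * (t * fderiv ℝ v (t • y) y))) t := by
    intro t
    have h1 : HasDerivAt (fun t : ℝ => t • y) y t := by
      simpa using (hasDerivAt_id t).smul_const y
    have h2 : HasDerivAt (fun t : ℝ => v (t • y)) (fderiv ℝ v (t • y) y) t :=
      (hv.diff _).hasFDerivAt.comp_hasDerivAt t h1
    refine HasDerivAt.congr_deriv (((hasDerivAt_id t).pow 3).mul (h2.pow 2)) ?_
    simp
    ring
  have hmono : MonotoneOn (fun t : ℝ => t ^ 3 * v (t • y) ^ 2) (Icc τ 1) := by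
    apply monotoneOn_of_deriv_nonneg (convex_Icc τ 1)
    · exact fun t _ => (hd t).continuousAt.continuousWithinAt
    · exact fun t _ => (hd t).differentiableAt.differentiableWithinAt
    · intro t ht
      rw [interior_Icc] at ht
      rw [(hd t).deriv]
      have := h t ht.1.le ht.2.le
      rw [map_smul, smul_eq_mul] at this
      have := hv.pos (t • y)
      positivity
  have hF := hmono (left_mem_Icc.2 hτ1) (right_mem_Icc.2 hτ1) hτ1
  simp only [one_pow, one_mul, one_smul] at hF
  apply le_of_sq_le_sq _ (hv.pos y).le
  have : Kel v l y ^ 2 = τ ^ 3 * v (τ • y) ^ 2 := by unfold Kel; rw [hτ]; ring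
  rw [this]; exact hF

def SS (v : CGSE → ℝ) (l : ℝ) : Prop := ∀ y, l ≤ ‖y‖ → Kel v l y ≤ v y

lemma step1 {v : CGSE → ℝ} (hv : CGSSol v) : ∃ l0 > 0, ∀ l, 0 < l → l ≤ l0 → SS v l := by
  have hg : Continuous fun z : CGSE => 3 * v z + 2 * fderiv ℝ v z z :=
    (continuous_const.mul hv.cont).add (continuous_const.mul (hv.contD.clm_apply continuous_id))
  have hg0 : 0 < 3 * v 0 + 2 * fderiv ℝ v 0 0 := by
    simp [hv.pos 0]
  obtain ⟨δ, hδ, hb⟩ := Metric.eventually_nhds_iff.1 (hg.continuousAt.eventually (lt_mem_nhds hg0))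
  set r := δ / 2 with hr
  have hr0 : 0 < r := half_pos hδ
  -- minimum on the sphere
  have hcs : IsCompact (Metric.closedBall (0 : CGSE) r) := isCompact_closedBall 0 r
  obtain ⟨p, _, hmin⟩ := hcs.exists_isMinOn ⟨0, by simp [hr0.le]⟩ hv.cont.continuousOn
  have hlow := exterior_lower hr0 (hv.pos p).le hv.cont.continuousOn
    (fun y _ => ⟨_, by have := hv.pos y; have : 0 ≤ v y ^ ((7:ℝ)/3) := by positivity
                       linarith, hv.lap y⟩)
    (fun y _ => (hv.pos y).le) (fun y hy => hmin (by simp [hy]))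
  refine ⟨min r (v p * r), lt_min hr0 (mul_pos (hv.pos p) hr0), ?_⟩
  intro l hl hl2 y hy
  have hn : 0 < ‖y‖ := hl.trans_le hy
  by_cases hyr : ‖y‖ < δ
  · apply Kel_mono hv hl hy
    intro t ht ht1
    have ht0 : 0 ≤ t := le_trans (by positivity) ht
    apply le_of_lt
    apply hb
    rw [dist_zero_right, norm_smul, Real.norm_eq_abs, abs_of_nonneg ht0]
    nlinarith
  · push Not at hyr
    refine le_trans ?_ (hlow y (by linarith))
    unfold Kel
    have h1 : l ≤ v p * r := hl2.trans (min_le_right _ _)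
    have h2 : l ^ 3 ≤ v p * r ^ 3 := by
      calc l ^ 3 ≤ (v p * r) ^ 3 := pow_le_pow_left₀ hl.le h1 3
        _ = v p ^ 3 * r ^ 3 := by ring
        _ ≤ v p * r ^ 3 := by
          gcongr
          have := hv.pos p
          have h' := hv.le1 p
          have : v p ^ 3 ≤ v p ^ 1 := pow_le_pow_of_le_one this.le h' (by norm_num)
          simpa using this
    have h3 := hv.le1 ((l ^ 2 * (‖y‖⁻¹) ^ 2) • y)
    have h4 := (hv.pos ((l ^ 2 * (‖y‖⁻¹) ^ 2) • y)).le
    calc l ^ 3 * (‖y‖⁻¹ ^ 3 * v ((l ^ 2 * ‖y‖⁻¹ ^ 2) • y)) ≤ l ^ 3 * (‖y‖⁻¹ ^ 3 * 1) := by gcongr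
      _ = l ^ 3 * ‖y‖⁻¹ ^ 3 := by ring
      _ ≤ _ := by gcongr

lemma deriv_nonneg_right {h : ℝ → ℝ} {d : ℝ} (hd : HasDerivAt h d 1) (h1 : h 1 = 0)
    (hp : ∀ t, 1 < t → t < 2 → 0 ≤ h t) : 0 ≤ d := by
  have hs := (hasDerivWithinAt_iff_tendsto_slope' (by simp)).1 (hd.hasDerivWithinAt (s := Ioi 1))
  refine ge_of_tendsto hs ?_
  filter_upwards [Ioo_mem_nhdsGT (show (1:ℝ) < 2 by norm_num)] with t ht
  rw [slope_def_field, h1, sub_zero]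
  exact div_nonneg (hp t ht.1 ht.2) (by linarith [ht.1])

lemma step2 {v : CGSE → ℝ} (hv : CGSSol v) {l : ℝ} (hl : 0 < l) (hS : SS v l) :
    (∀ y, l < ‖y‖ → Kel v l y = v y) ∨ ∀ᶠ l' in 𝓝 l, l ≤ l' → SS v l' := by
  have hne : ∀ y : CGSE, l ≤ ‖y‖ → y ≠ 0 := fun y hy => norm_pos_iff.1 (hl.trans_le hy)
  set w : CGSE → ℝ := fun y => v y - Kel v l y with hw
  have hwc : ContinuousOn w {y | l ≤ ‖y‖} := fun y hy =>
    (hv.cont.continuousAt.sub (Kel_contAt' hv l (hne y hy))).continuousWithinAt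
  have hwl : ∀ y, l < ‖y‖ → ∃ L ≤ 0, HasLap w y L := by
    intro y hy
    refine ⟨_, ?_, (hv.lap y).sub (Kel_lap hv hl (hne y hy.le))⟩
    have := Real.rpow_le_rpow (Kel_pos hv hl (hne y hy.le)).le (hS y hy.le)
      (show (0:ℝ) ≤ 7 / 3 by norm_num)
    linarith
  have hw0 : ∀ y, l ≤ ‖y‖ → 0 ≤ w y := fun y hy => sub_nonneg.2 (hS y hy)
  rcases strong_max hl (hwc.mono fun y (hy : l < ‖y‖) => (le_of_lt hy : l ≤ ‖y‖)) hwl (fun y hy => hw0 y hy.le) with hz | hpos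
  · left
    intro y hy
    have := hz y hy
    simp only [hw] at this
    linarith
  right
  -- minimum on the sphere of radius 2l
  obtain ⟨m, hm, hmw⟩ : ∃ m > 0, ∀ y, ‖y‖ = 2 * l → m ≤ w y := by
    have hcs : IsCompact (Metric.sphere (0 : CGSE) (2 * l)) := isCompact_sphere 0 _
    have hnon : (Metric.sphere (0 : CGSE) (2 * l)).Nonempty :=
      NormedSpace.sphere_nonempty.2 (by linarith)
    obtain ⟨p, hp, hmin⟩ := hcs.exists_isMinOn hnon
      (hwc.mono fun y hy => by
        have : ‖y‖ = 2 * l := by simpa using hy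
        show l ≤ ‖y‖
        linarith)
    have hp' : ‖p‖ = 2 * l := by simpa using hp
    exact ⟨w p, hpos p (by linarith), fun y hy => hmin (by simpa using hy)⟩
  have hout := exterior_lower (r := 2 * l) (by linarith) hm.le
    (hwc.mono fun y hy => by
      have : 2 * l ≤ ‖y‖ := hy
      show l ≤ ‖y‖
      linarith)
    (fun y hy => hwl y (by linarith)) (fun y hy => hw0 y (by linarith)) hmw
  have hin : ∀ y, l ≤ ‖y‖ → ‖y‖ ≤ 2 * l → m - m * l ^ 3 * (‖y‖⁻¹) ^ 3 ≤ w y := by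
    intro y h1 h2
    have := annulus_cmp (p := 0) (a := l) (b := 2 * l) hl (w := w) (α := - (m * l ^ 3)) (β := m)
      (hwc.mono fun z hz => by simpa using hz.1)
      (fun z hz _ => hwl z (by simpa using hz))
      (fun z hz => by
        rw [sub_zero] at hz
        have h2 := hw0 z hz.ge
        have h3 : m * l ^ 3 * (l⁻¹) ^ 3 = m := by field_simp
        linarith)
      (fun z hz => by
        rw [sub_zero] at hz
        have := hmw z hz
        have : 0 ≤ m * l ^ 3 * ((2 * l)⁻¹) ^ 3 := by positivity
        linarith) y (by simpa using h1) (by simpa using h2)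
    simp only [sub_zero] at this
    linarith
  -- Hopf
  have hopf : ∀ y, ‖y‖ = l → 0 < 3 * v y + 2 * fderiv ℝ v y y := by
    intro y hy
    have hd : HasDerivAt (fun t : ℝ => v (t • y) - (t⁻¹) ^ 3 * v (t⁻¹ • y) - (m - m * (t⁻¹) ^ 3))
        (3 * v y + 2 * fderiv ℝ v y y - 3 * m) 1 := by
      have hi : HasDerivAt (fun t : ℝ => t⁻¹) (-1) 1 := by
        simpa using hasDerivAt_inv (one_ne_zero (α := ℝ))
      have h1 : HasDerivAt (fun t : ℝ => t • y) y 1 := by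
        simpa using (hasDerivAt_id (1:ℝ)).smul_const y
      have h2 : HasDerivAt (fun t : ℝ => t⁻¹ • y) (-y) 1 := by
        simpa using hi.smul_const y
      have hF1 : HasFDerivAt v (fderiv ℝ v y) ((1:ℝ) • y) := by
        simpa using (hv.diff y).hasFDerivAt
      have hF2 : HasFDerivAt v (fderiv ℝ v y) ((1:ℝ)⁻¹ • y) := by
        simpa using (hv.diff y).hasFDerivAt
      have h3 := hF1.comp_hasDerivAt (1:ℝ) h1
      have h4 := hF2.comp_hasDerivAt (1:ℝ) h2
      refine HasDerivAt.congr_deriv ((h3.sub ((hi.pow 3).mul h4)).sub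
        (((hi.pow 3).const_mul m).const_sub m)) ?_
      simp
      ring
    have := deriv_nonneg_right hd (by simp) (by
      intro t ht1 ht2
      have hty : ‖t • y‖ = t * l := by
        rw [norm_smul, Real.norm_eq_abs, abs_of_pos (by linarith), hy]
      have h5 := hin (t • y) (by rw [hty]; nlinarith) (by rw [hty]; nlinarith)
      have h6 : m * l ^ 3 * (‖t • y‖⁻¹) ^ 3 = m * (t⁻¹) ^ 3 := by
        rw [hty]; field_simp
      have h7 : Kel v l (t • y) = (t⁻¹) ^ 3 * v (t⁻¹ • y) := by
        unfold Kel
        rw [hty, smul_smul]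
        have e1 : l ^ 2 * (t * l)⁻¹ ^ 2 * t = t⁻¹ := by field_simp
        rw [e1]
        field_simp
      rw [h6] at h5
      simp only [hw, h7] at h5
      linarith)
    linarith
  -- far region
  have far : ∀ᶠ l' in 𝓝 l, ∀ p ∈ Metric.closedBall (0 : CGSE) (l⁻¹),
      l' ^ 3 * v (l' ^ 2 • p) - l ^ 3 * v (l ^ 2 • p) < m * (2 * l) ^ 3 := by
    apply (isCompact_closedBall (0 : CGSE) (l⁻¹)).eventually_forall_of_forall_eventually
    intro p _
    have hcv := hv.cont
    have hc : Continuous fun z : ℝ × CGSE => z.1 ^ 3 * v (z.1 ^ 2 • z.2) - l ^ 3 * v (l ^ 2 • z.2) := by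
      fun_prop
    apply hc.continuousAt.eventually (gt_mem_nhds _)
    simp only [sub_self]
    positivity
  -- near region
  have hKc : IsCompact {y : CGSE | l ≤ ‖y‖ ∧ ‖y‖ ≤ 2 * l} := by
    apply (isCompact_closedBall (0 : CGSE) (2 * l)).of_isClosed_subset
    · exact (isClosed_le continuous_const continuous_norm).inter
        (isClosed_le continuous_norm continuous_const)
    · intro z hz
      simpa using hz.2
  have near : ∀ᶠ l' in 𝓝 l, ∀ y ∈ {y : CGSE | l ≤ ‖y‖ ∧ ‖y‖ ≤ 2 * l},
      l' ≤ ‖y‖ → Kel v l' y ≤ v y := by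
    apply hKc.eventually_forall_of_forall_eventually
    rintro y ⟨hy1, hy2⟩
    rcases eq_or_lt_of_le hy1 with hy | hy
    · have hg : Continuous fun z : CGSE => 3 * v z + 2 * fderiv ℝ v z z :=
        (continuous_const.mul hv.cont).add (continuous_const.mul (hv.contD.clm_apply continuous_id))
      obtain ⟨δ, hδ, hb⟩ := Metric.eventually_nhds_iff.1
        (hg.continuousAt.eventually (lt_mem_nhds (hopf y hy.symm)))
      have hn : ‖y‖ ≠ 0 := by rw [← hy]; exact hl.ne'
      have hi : ContinuousAt (fun z : ℝ × CGSE => ‖z.2‖⁻¹) (l, y) :=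
        ContinuousAt.inv₀ (by fun_prop) hn
      have h2 : ContinuousAt (fun z : ℝ × CGSE => (z.1 ^ 2 * (‖z.2‖⁻¹) ^ 2) • z.2) (l, y) :=
        ((continuousAt_fst.pow 2).mul (hi.pow 2)).smul continuousAt_snd
      have hval : (l ^ 2 * (‖y‖⁻¹) ^ 2) • y = y := by
        rw [← hy]
        have : l ^ 2 * l⁻¹ ^ 2 = 1 := by field_simp
        rw [this, one_smul]
      have e1 : ∀ᶠ z : ℝ × CGSE in 𝓝 (l, y), (z.1 ^ 2 * (‖z.2‖⁻¹) ^ 2) • z.2 ∈ Metric.ball y δ := by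
        apply h2.eventually
        simp only [hval]
        exact Metric.ball_mem_nhds y hδ
      have e2 : ∀ᶠ z : ℝ × CGSE in 𝓝 (l, y), z.2 ∈ Metric.ball y δ :=
        continuousAt_snd.eventually (Metric.ball_mem_nhds y hδ)
      have e3 : ∀ᶠ z : ℝ × CGSE in 𝓝 (l, y), 0 < z.1 :=
        continuousAt_fst.eventually (lt_mem_nhds hl)
      filter_upwards [e1, e2, e3] with z h1 h2 h3 hz
      apply Kel_mono hv h3 hz
      intro t ht1 ht2
      apply le_of_lt
      apply hb
      rw [← Metric.mem_ball]
      set τ := z.1 ^ 2 * (‖z.2‖⁻¹) ^ 2 with hτ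
      rcases eq_or_lt_of_le (ht1.trans ht2) with h | h
      · have : t = 1 := le_antisymm ht2 (h ▸ ht1)
        rw [this, one_smul]; exact h2
      have hcx : ((1 - t) / (1 - τ)) • (τ • z.2) + ((t - τ) / (1 - τ)) • z.2 ∈ Metric.ball y δ :=
        convex_ball y δ h1 h2
        (div_nonneg (by linarith) (by linarith)) (div_nonneg (by linarith) (by linarith))
        (by have : 1 - τ ≠ 0 := by linarith
            field_simp; ring)
      convert hcx using 1
      rw [smul_smul, ← add_smul]
      congr 1
      have : 1 - τ ≠ 0 := by linarith
      field_simp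
      ring
    · have hc : ContinuousAt (fun z : ℝ × CGSE => v z.2 - Kel v z.1 z.2) (l, y) :=
        (ContinuousAt.comp (f := fun z : ℝ × CGSE => z.2) (g := v) hv.cont.continuousAt continuousAt_snd).sub
          (Kel_contAt hv l (hne y hy1))
      filter_upwards [hc.eventually (lt_mem_nhds (hpos y hy))] with z hz _
      linarith
  filter_upwards [far, near] with l' hfar hnear hll y hy
  by_cases hy2 : ‖y‖ ≤ 2 * l
  · exact hnear y ⟨hll.trans hy, hy2⟩ hy
  push Not at hy2
  have hn : 0 < ‖y‖ := by linarith
  have h1 := hout y hy2.le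
  have h2 := hfar ((‖y‖⁻¹) ^ 2 • y) (by
    rw [Metric.mem_closedBall, dist_zero_right, norm_smul, Real.norm_eq_abs,
      abs_of_pos (by positivity)]
    have : ‖y‖⁻¹ ^ 2 * ‖y‖ = ‖y‖⁻¹ := by field_simp
    rw [this]
    exact inv_anti₀ hl (hll.trans hy))
  rw [smul_smul, smul_smul] at h2
  simp only [hw] at h1
  unfold Kel at h1 ⊢
  have h3 : 0 < (‖y‖⁻¹) ^ 3 := by positivity
  have h4 := mul_lt_mul_of_pos_right h2 h3
  linarith

lemma dichotomy {v : CGSE → ℝ} (hv : CGSSol v) :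
    (∀ l, 0 < l → SS v l) ∨ ∃ l, 0 < l ∧ ∀ y, l < ‖y‖ → Kel v l y = v y := by
  by_contra hcon
  push Not at hcon
  obtain ⟨⟨l1, hl1, hS1⟩, hno⟩ := hcon
  set T : Set ℝ := {l | 0 < l ∧ ∀ μ, 0 < μ → μ ≤ l → SS v μ} with hT
  obtain ⟨l0, hl0, h0⟩ := step1 hv
  have hne : T.Nonempty := ⟨l0, hl0, h0⟩
  have hbd : BddAbove T := by
    refine ⟨l1, ?_⟩
    rintro l ⟨_, hl⟩
    by_contra h
    push Not at h
    exact hS1 (hl l1 hl1 h.le)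
  set s := sSup T with hs
  have hspos : 0 < s := lt_of_lt_of_le hl0 (le_csSup hbd ⟨hl0, h0⟩)
  have hlt : ∀ μ, 0 < μ → μ < s → SS v μ := by
    intro μ h1 h2
    obtain ⟨l, hl, hl2⟩ := exists_lt_of_lt_csSup hne h2
    exact hl.2 μ h1 hl2.le
  have hSs : SS v s := by
    intro y hy
    have hy0 : y ≠ 0 := norm_pos_iff.1 (hspos.trans_le hy)
    have hc : ContinuousAt (fun l => Kel v l y) s :=
      ContinuousAt.comp (f := fun l : ℝ => (l, y)) (g := fun z : ℝ × CGSE => Kel v z.1 z.2)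
        (Kel_contAt hv s hy0) (by fun_prop)
    have ht : Tendsto (fun l => Kel v l y) (𝓝[<] s) (𝓝 (Kel v s y)) :=
      hc.tendsto.mono_left nhdsWithin_le_nhds
    refine le_of_tendsto ht ?_
    filter_upwards [Ioo_mem_nhdsLT hspos] with l hl
    exact hlt l hl.1 hl.2 y (hl.2.le.trans hy)
  rcases step2 hv hspos hSs with h | h
  · obtain ⟨y, hy, hy'⟩ := hno s hspos
    exact hy' (h y hy)
  · obtain ⟨ε, hε, hb⟩ := Metric.eventually_nhds_iff.1 h
    have : s + ε / 2 ∈ T := by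
      refine ⟨by linarith, ?_⟩
      intro μ h1 h2
      rcases lt_or_ge μ s with h3 | h3
      · exact hlt μ h1 h3
      · refine hb ?_ h3
        rw [Real.dist_eq, abs_of_nonneg (by linarith)]
        linarith
    have := le_csSup hbd this
    linarith

lemma CGSSol.translate {u : CGSE → ℝ} (hu : CGSSol u) (x : CGSE) : CGSSol (fun z => u (x + z)) where
  c2 := hu.c2.comp (contDiff_const.add contDiff_id)
  pos := fun y => hu.pos _
  le1 := fun y => hu.le1 _
  pde := by
    intro y
    rw [← hu.pde]
    have h1 : fderiv ℝ (fun z => u (x + z)) = fun z => fderiv ℝ u (x + z) := by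
      funext z
      exact fderiv_comp_add_left x
    rw [h1]
    rw [fderiv_comp_add_left (f := fderiv ℝ u) x]

def CGSFin (u : CGSE → ℝ) (x : CGSE) (l : ℝ) : Prop :=
  0 < l ∧ ∀ y, l < ‖y‖ → Kel (fun z => u (x + z)) l y = u (x + y)

lemma mixed {u : CGSE → ℝ} (hu : CGSSol u) {x x' : CGSE} {l' : ℝ}
    (hinf : ∀ l, 0 < l → SS (fun z => u (x + z)) l) (hfin : CGSFin u x' l') : False := by
  obtain ⟨hl', heq⟩ := hfin
  have hux := hu.pos x
  set l := 3 * l' / u x with hl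
  have hl0 : 0 < l := by positivity
  set θ := cgsE 0 with hθ
  have hθ1 : ‖θ‖ = 1 := by simp [hθ, cgsE]
  have hinv : Tendsto (fun R : ℝ => R⁻¹) atTop (𝓝 0) := tendsto_inv_atTop_zero
  have hcc : Tendsto (fun R : ℝ => u (x + (l ^ 2 * R⁻¹) • θ)) atTop (𝓝 (u x)) := by
    have hcu := hu.cont
    have hc : Continuous fun e : ℝ => u (x + (l ^ 2 * e) • θ) := by fun_prop
    have := (hc.tendsto 0).comp hinv
    simpa [Function.comp_def] using this
  have ev := (((hcc.eventually (lt_mem_nhds (half_lt_self hux))).and (eventually_ge_atTop l)).and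
    (eventually_ge_atTop (2 * ‖x - x'‖))).and (eventually_gt_atTop (2 * l'))
  obtain ⟨R, ⟨⟨h1, h2⟩, h3⟩, h4⟩ := ev.exists
  have hR : 0 < R := by linarith
  have hRn : ‖R • θ‖ = R := by rw [norm_smul, hθ1, Real.norm_eq_abs, abs_of_pos hR, mul_one]
  have hA := hinf l hl0 (R • θ) (by rw [hRn]; exact h2)
  have hyn : R / 2 ≤ ‖x - x' + R • θ‖ := by
    have : ‖R • θ‖ ≤ ‖x - x' + R • θ‖ + ‖x - x'‖ := by
      have := norm_sub_le (x - x' + R • θ) (x - x')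
      simpa using this
    rw [hRn] at this
    linarith
  have hB := heq (x - x' + R • θ) (by linarith)
  have hxy : x' + (x - x' + R • θ) = x + R • θ := by abel
  unfold Kel at hA hB
  rw [hxy] at hB
  rw [hRn, smul_smul] at hA
  have e1 : l ^ 2 * R⁻¹ ^ 2 * R = l ^ 2 * R⁻¹ := by field_simp
  simp only [e1] at hA
  have hB2 : u (x + R • θ) ≤ 8 * l' ^ 3 * R⁻¹ ^ 3 := by
    rw [← hB]
    have hi : ‖x - x' + R • θ‖⁻¹ ≤ 2 * R⁻¹ := by
      calc ‖x - x' + R • θ‖⁻¹ ≤ (R / 2)⁻¹ := inv_anti₀ (by linarith) hyn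
        _ = 2 * R⁻¹ := by field_simp
    set q := x' + (l' ^ 2 * ‖x - x' + R • θ‖⁻¹ ^ 2) • (x - x' + R • θ) with hq
    have h5 := hu.le1 q
    have h6 := (hu.pos q).le
    calc l' ^ 3 * (‖x - x' + R • θ‖⁻¹ ^ 3 * u q) ≤ l' ^ 3 * ((2 * R⁻¹) ^ 3 * 1) := by gcongr
      _ = _ := by ring
  have h7 : 0 < R⁻¹ ^ 3 := by positivity
  have h8 : l ^ 3 * (R⁻¹ ^ 3 * (u x / 2)) ≤ 8 * l' ^ 3 * R⁻¹ ^ 3 := by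
    refine le_trans ?_ (hA.trans hB2)
    gcongr
  have h9 : l ^ 3 * (u x / 2) ≤ 8 * l' ^ 3 := by
    by_contra h
    push Not at h
    nlinarith
  have h10 : l * u x = 3 * l' := by rw [hl]; field_simp
  have hle := hu.le1 x
  have h11 : 3 * l' ≤ l := by nlinarith
  have h12 : (3 * l') * (3 * l') ≤ l * l := by nlinarith
  have h13 : (3 * l') * ((3 * l') * (3 * l')) ≤ (l * u x) * (l * l) := by
    rw [h10]; gcongr
  have h14 : 0 < l' ^ 3 := by positivity
  nlinarith

lemma all_inf {u : CGSE → ℝ} (hu : CGSSol u) (hu0 : u 0 = 1)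
    (hinf : ∀ x l, 0 < l → SS (fun z => u (x + z)) l) : False := by
  have hone : ∀ z, u z = 1 := by
    intro z
    by_cases hz : z = 0
    · rw [hz, hu0]
    have hn : 0 < ‖z‖ := norm_pos_iff.2 hz
    have key : ∀ s : ℝ, 0 < s → (s / (1 + s)) ^ 3 ≤ u z ^ 2 := by
      intro s hs
      set l := √(s * (1 + s)) * ‖z‖ with hl
      have hl0 : 0 < l := by positivity
      have hnz : ‖(1 + s) • z‖ = (1 + s) * ‖z‖ := by
        rw [norm_smul, Real.norm_eq_abs, abs_of_pos (by linarith)]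
      have hsq : l ^ 2 = s * (1 + s) * ‖z‖ ^ 2 := by
        rw [hl, mul_pow, Real.sq_sqrt (by positivity)]
      have h := hinf (-(s • z)) l hl0 ((1 + s) • z) (by
        rw [hnz]
        apply le_of_sq_le_sq _ (by positivity)
        rw [hsq]
        have : 0 < ‖z‖ ^ 2 := by positivity
        nlinarith)
      have e1 : -(s • z) + (1 + s) • z = z := by module
      unfold Kel at h
      have e2 : l ^ 2 * ‖(1 + s) • z‖⁻¹ ^ 2 * (1 + s) = s := by
        rw [hnz, hsq]; field_simp
      have e3 : -(s • z) + (l ^ 2 * ‖(1 + s) • z‖⁻¹ ^ 2) • (1 + s) • z = 0 := by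
        rw [smul_smul, e2]; module
      simp only [e1, e3, hu0, mul_one] at h
      have h' := pow_le_pow_left₀ (by positivity) h 2
      refine le_trans (le_of_eq ?_) h'
      have : (l ^ 3 * ‖(1 + s) • z‖⁻¹ ^ 3) ^ 2 = (l ^ 2 * ‖(1 + s) • z‖⁻¹ ^ 2) ^ 3 := by ring
      rw [this]
      congr 1
      rw [hnz, hsq]; field_simp
    have ht : Tendsto (fun s : ℝ => (1 - (1 + s)⁻¹) ^ 3) atTop (𝓝 ((1 - 0) ^ 3)) :=
      ((tendsto_inv_atTop_zero.comp (tendsto_atTop_add_const_left _ 1 tendsto_id)).const_sub 1).pow 3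
    have h2 : (1 - 0 : ℝ) ^ 3 ≤ u z ^ 2 := by
      refine le_of_tendsto ht ?_
      filter_upwards [eventually_gt_atTop 0] with s hs
      have := key s hs
      have e : 1 - (1 + s)⁻¹ = s / (1 + s) := by field_simp; ring
      rw [e]; exact this
    have := hu.pos z
    have := hu.le1 z
    nlinarith
  have hc : u = fun _ => 1 := funext hone
  have := hu.pde 0
  rw [hc] at this
  simp at this

lemma fin_deriv {u : CGSE → ℝ} (hu : CGSSol u) (hu0 : u 0 = 1) {x : CGSE} (hx : x ≠ 0) {l l0 : ℝ}
    (h0 : CGSFin u 0 l0) (h1 : CGSFin u x l) :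
    l ^ 3 * u x = l0 ^ 3 ∧ l ^ 5 * fderiv ℝ u x x = -3 * l0 ^ 3 * ‖x‖ ^ 2 := by
  have hn : 0 < ‖x‖ := norm_pos_iff.2 hx
  have hD0 : fderiv ℝ u 0 = 0 := by
    apply IsLocalMax.fderiv_eq_zero
    exact Eventually.of_forall fun y => by rw [hu0]; exact hu.le1 y
  set c := (‖x‖⁻¹) ^ 2 with hc
  set f : ℝ → ℝ := fun e => l ^ 3 * u (x + (l ^ 2 * c * e) • x) with hf
  set g : ℝ → ℝ := fun e => l0 ^ 3 * ((1 + e)⁻¹ ^ 3 * u ((l0 ^ 2 * c * (e * (1 + e)⁻¹)) • x)) with hg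
  have hfd : HasDerivAt f (l ^ 3 * (l ^ 2 * c * fderiv ℝ u x x)) 0 := by
    have ha : HasDerivAt (fun e : ℝ => x + (l ^ 2 * c * e) • x) ((l ^ 2 * c) • x) 0 := by
      simpa using (((hasDerivAt_id (0:ℝ)).const_mul (l ^ 2 * c)).smul_const x).const_add x
    have hF : HasFDerivAt u (fderiv ℝ u x) (x + (l ^ 2 * c * 0) • x) := by
      simpa using (hu.diff x).hasFDerivAt
    refine HasDerivAt.congr_deriv ((hF.comp_hasDerivAt (0:ℝ) ha).const_mul (l ^ 3)) ?_
    simp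
  have hgd : HasDerivAt g (-3 * l0 ^ 3) 0 := by
    have hi : HasDerivAt (fun e : ℝ => (1 + e)⁻¹) (-1) 0 := by
      refine HasDerivAt.congr_deriv (((hasDerivAt_id (0:ℝ)).const_add 1).inv (by simp)) ?_
      simp
    have ha : HasDerivAt (fun e : ℝ => (l0 ^ 2 * c * (e * (1 + e)⁻¹)) • x) ((l0 ^ 2 * c) • x) 0 := by
      have := (((hasDerivAt_id (0:ℝ)).mul hi).const_mul (l0 ^ 2 * c)).smul_const x
      simpa using this
    have hF : HasFDerivAt u (0 : CGSE →L[ℝ] ℝ) ((l0 ^ 2 * c * (0 * (1 + 0)⁻¹)) • x) := by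
      have := (hu.diff 0).hasFDerivAt
      rw [hD0] at this
      simpa using this
    refine HasDerivAt.congr_deriv (((hi.pow 3).mul (hF.comp_hasDerivAt (0:ℝ) ha)).const_mul (l0 ^ 3)) ?_
    simp [hu0]
    ring
  have hev : ∀ᶠ e in 𝓝[≠] (0:ℝ), f e = g e := by
    have hinv : Tendsto (fun e : ℝ => |e⁻¹|) (𝓝[≠] 0) atTop := by
      have := tendsto_norm_inv_nhdsNE_zero_atTop (α := ℝ)
      simpa using this
    have hbig := hinv.eventually (eventually_gt_atTop (l * ‖x‖⁻¹ + l0 * ‖x‖⁻¹ + 1))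
    filter_upwards [hbig, self_mem_nhdsWithin] with e he he0
    have he0 : e ≠ 0 := he0
    obtain ⟨hl, hfx⟩ := h1
    obtain ⟨hl0, hf0⟩ := h0
    have p1 : 0 < l * ‖x‖⁻¹ := by positivity
    have p2 : 0 < l0 * ‖x‖⁻¹ := by positivity
    have habs : |e⁻¹| - 1 ≤ |1 + e⁻¹| := by
      have := abs_sub_abs_le_abs_sub (e⁻¹) (-1)
      simp only [abs_neg, abs_one, sub_neg_eq_add] at this
      rwa [add_comm 1 e⁻¹]
    have n1 : ‖e⁻¹ • x‖ = |e⁻¹| * ‖x‖ := by rw [norm_smul, Real.norm_eq_abs]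
    have n2 : ‖(1 + e⁻¹) • x‖ = |1 + e⁻¹| * ‖x‖ := by rw [norm_smul, Real.norm_eq_abs]
    have q1 : l < ‖e⁻¹ • x‖ := by
      rw [n1, ← div_lt_iff₀ hn, div_eq_mul_inv]; linarith
    have q2 : l0 < ‖(1 + e⁻¹) • x‖ := by
      rw [n2, ← div_lt_iff₀ hn, div_eq_mul_inv]; linarith
    have r1 := hfx _ q1
    have r2 := hf0 _ q2
    have hne : 1 + e⁻¹ ≠ 0 := by
      intro h
      rw [h, abs_zero] at habs
      linarith
    have hne' : 1 + e ≠ 0 := by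
      intro h
      apply hne
      have : e = -1 := by linarith
      rw [this]; norm_num
    have exy : x + e⁻¹ • x = 0 + (1 + e⁻¹) • x := by module
    rw [exy, ← r2] at r1
    unfold Kel at r1
    simp only [zero_add, n1, n2, smul_smul] at r1
    have s1 : l ^ 2 * (|e⁻¹| * ‖x‖)⁻¹ ^ 2 * e⁻¹ = l ^ 2 * c * e := by
      rw [inv_pow, mul_pow, sq_abs, hc]; field_simp
    have s2 : l0 ^ 2 * (|1 + e⁻¹| * ‖x‖)⁻¹ ^ 2 * (1 + e⁻¹) = l0 ^ 2 * c * (e * (1 + e)⁻¹) := by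
      rw [inv_pow, mul_pow, sq_abs, hc]
      have : 1 + e⁻¹ = (1 + e) * e⁻¹ := by field_simp; ring
      rw [this]; field_simp
    rw [s1, s2] at r1
    have hpe : 0 < 1 + e := by
      have : 1 < |e⁻¹| := by linarith
      rw [abs_inv] at this
      have h3 : |e| < 1 := by
        by_contra h
        push Not at h
        have := inv_le_one_of_one_le₀ h
        linarith
      linarith [(abs_lt.1 h3).1]
    have s3 : |1 + e⁻¹| = (1 + e) * |e|⁻¹ := by
      have : 1 + e⁻¹ = (1 + e) * e⁻¹ := by field_simp; ring
      rw [this, abs_mul, abs_of_pos hpe, abs_inv]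
    rw [s3, abs_inv] at r1
    have ha : 0 < |e| := abs_pos.2 he0
    simp only [hf, hg]
    have hpp : 0 < (|e| * ‖x‖⁻¹) ^ 3 := by positivity
    apply mul_left_cancel₀ hpp.ne'
    calc _ = l ^ 3 * ((|e|⁻¹ * ‖x‖)⁻¹ ^ 3 * u (x + (l ^ 2 * c * e) • x)) := by
            rw [mul_inv, inv_inv]; ring
      _ = _ := r1
      _ = _ := by rw [mul_inv, mul_inv, inv_inv]; ring
  have h00 : f 0 = g 0 := by
    have t1 : Tendsto f (𝓝[≠] 0) (𝓝 (f 0)) := hfd.continuousAt.tendsto.mono_left nhdsWithin_le_nhds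
    have t2 : Tendsto g (𝓝[≠] 0) (𝓝 (g 0)) := hgd.continuousAt.tendsto.mono_left nhdsWithin_le_nhds
    exact tendsto_nhds_unique t1 (t2.congr' (hev.mono fun e he => he.symm))
  have hev2 : f =ᶠ[𝓝 0] g := by
    rw [eventually_nhdsWithin_iff] at hev
    filter_upwards [hev] with e he
    by_cases h : e = 0
    · rw [h, h00]
    · exact he h
  have hder := (hgd.congr_of_eventuallyEq hev2).unique hfd
  constructor
  · simpa [hf, hg, hu0] using h00
  · have hcx : c * ‖x‖ ^ 2 = 1 := by rw [hc]; field_simp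
    have : l ^ 5 * fderiv ℝ u x x * (c * ‖x‖ ^ 2) = -3 * l0 ^ 3 * ‖x‖ ^ 2 := by
      rw [hder]; ring
    rw [hcx, mul_one] at this
    exact this

lemma Has2.unique {f : ℝ → ℝ} {a b : ℝ} (ha : Has2 f a) (hb : Has2 f b) : a = b := by
  obtain ⟨g, h1, h2⟩ := ha
  obtain ⟨g', h3, h4⟩ := hb
  have : g =ᶠ[𝓝 0] g' := by
    filter_upwards [h1, h3] with t ht ht'
    exact ht.unique ht'
  exact h2.unique (h4.congr_of_eventuallyEq this)

lemma fin_formula {u : CGSE → ℝ} (hu : CGSSol u) (hu0 : u 0 = 1) {l0 : ℝ} (hl0 : 0 < l0)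
    (hd : ∀ x, x ≠ 0 → ∃ l, 0 < l ∧ l ^ 3 * u x = l0 ^ 3 ∧ l ^ 5 * fderiv ℝ u x x = -3 * l0 ^ 3 * ‖x‖ ^ 2) :
    ∀ x, u x ^ (-(2:ℝ) / 3) = 1 + (l0⁻¹) ^ 2 * ‖x‖ ^ 2 := by
  have hD0 : fderiv ℝ u 0 = 0 := by
    apply IsLocalMax.fderiv_eq_zero
    exact Eventually.of_forall fun y => by rw [hu0]; exact hu.le1 y
  have hd2 : ∀ x, u x ^ (-(5:ℝ) / 3) * fderiv ℝ u x x = -3 * (l0⁻¹) ^ 2 * ‖x‖ ^ 2 := by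
    intro x
    by_cases hx : x = 0
    · simp [hx]
    obtain ⟨l, hl, h1, h2⟩ := hd x hx
    have hp := hu.pos x
    have e1 : u x = (l0 * l⁻¹) ^ 3 := by
      rw [mul_pow, ← h1]; field_simp
    have e2 : u x ^ (-(5:ℝ) / 3) = (l * l0⁻¹) ^ 5 := by
      rw [e1, ← Real.rpow_natCast, ← Real.rpow_mul (by positivity)]
      have : ((3:ℕ):ℝ) * (-(5:ℝ) / 3) = -((5:ℕ):ℝ) := by norm_num
      rw [this, Real.rpow_neg (by positivity), Real.rpow_natCast, ← inv_pow]
      congr 1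
      field_simp
    rw [e2]
    have : (l * l0⁻¹) ^ 5 * fderiv ℝ u x x = (l0⁻¹) ^ 5 * (l ^ 5 * fderiv ℝ u x x) := by ring
    rw [this, h2]
    field_simp
  intro x
  have hder : ∀ t : ℝ, HasDerivAt (fun t : ℝ => u (t • x) ^ (-(2:ℝ) / 3) - (l0⁻¹) ^ 2 * ‖x‖ ^ 2 * t ^ 2) 0 t := by
    intro t
    have h1 : HasDerivAt (fun t : ℝ => t • x) x t := by
      simpa using (hasDerivAt_id t).smul_const x
    have h2 : HasDerivAt (fun t : ℝ => u (t • x)) (fderiv ℝ u (t • x) x) t :=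
      (hu.diff _).hasFDerivAt.comp_hasDerivAt t h1
    have h3 := h2.rpow_const (p := -(2:ℝ) / 3) (Or.inl (hu.pos _).ne')
    have h4 := ((hasDerivAt_id t).pow 2).const_mul ((l0⁻¹) ^ 2 * ‖x‖ ^ 2)
    refine HasDerivAt.congr_deriv (h3.sub h4) ?_
    have e : -(2:ℝ) / 3 - 1 = -(5:ℝ) / 3 := by norm_num
    rw [e]
    have key : u (t • x) ^ (-(5:ℝ) / 3) * fderiv ℝ u (t • x) x = -3 * (l0⁻¹) ^ 2 * ‖x‖ ^ 2 * t := by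
      by_cases ht : t = 0
      · simp [ht, hD0]
      · have := hd2 (t • x)
        rw [map_smul, norm_smul, mul_pow, Real.norm_eq_abs, sq_abs, smul_eq_mul] at this
        apply mul_left_cancel₀ ht
        linarith
    rw [inv_pow] at key
    simp
    linarith
  have hconst := is_const_of_deriv_eq_zero (fun t => (hder t).differentiableAt) (fun t => (hder t).deriv) 1 0
  simp [hu0] at hconst
  rw [inv_pow]
  linarith

theorem cgs_main {u : CGSE → ℝ} (hu : CGSSol u) (hu0 : u 0 = 1) :
    ∀ y, u y = (1 + ‖y‖ ^ 2) ^ (-(3 : ℝ) / 2) := by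
  have hdich := fun x => dichotomy (hu.translate x)
  have hfin : ∀ x, ∃ l, CGSFin u x l := by
    by_contra hcon
    push Not at hcon
    obtain ⟨x, hx⟩ := hcon
    have hxi : ∀ l, 0 < l → SS (fun z => u (x + z)) l := by
      rcases hdich x with h | ⟨l, h⟩
      · exact h
      · exact absurd h (hx l)
    apply all_inf hu hu0
    intro x'
    rcases hdich x' with h | ⟨l, h⟩
    · exact h
    · exact (mixed hu hxi (x' := x') (l' := l) h).elim
  obtain ⟨l0, h0⟩ := hfin 0
  have hform := fin_formula hu hu0 h0.1 (fun x hx => by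
    obtain ⟨l, hl⟩ := hfin x
    exact ⟨l, hl.1, fin_deriv hu hu0 hx h0 hl⟩)
  set a := (l0⁻¹) ^ 2 with ha
  have hform2 : ∀ y, u y = (1 + a * ‖y‖ ^ 2) ^ (-(3:ℝ) / 2) := by
    intro y
    rw [← hform y, ← Real.rpow_mul (hu.pos y).le]
    norm_num
  have ha1 : a = 1 := by
    obtain ⟨s, h1, h2⟩ := hu.lap 0
    have hs : ∀ i, s i = -3 * a := by
      intro i
      apply (h1 i).unique
      have hb : ∀ t : ℝ, 0 < 1 + a * t ^ 2 := fun t => by positivity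
      have hu' : (fun t : ℝ => u (0 + t • cgsE i)) = fun t => (1 + a * t ^ 2) ^ (-(3:ℝ) / 2) := by
        funext t
        rw [hform2, cgs_norm_line]
        simp
      rw [hu']
      have hq : ∀ t : ℝ, HasDerivAt (fun t : ℝ => 1 + a * t ^ 2) (2 * a * t) t := by
        intro t
        refine HasDerivAt.congr_deriv ((((hasDerivAt_id t).pow 2).const_mul a).const_add 1) ?_
        simp; ring
      refine ⟨fun t => (-3 * a * t) * (1 + a * t ^ 2) ^ (-(5:ℝ) / 2), Eventually.of_forall fun t => ?_, ?_⟩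
      · refine HasDerivAt.congr_deriv ((hq t).rpow_const (p := -(3:ℝ) / 2) (Or.inl (hb t).ne')) ?_
        have e : -(3:ℝ) / 2 - 1 = -(5:ℝ) / 2 := by norm_num
        rw [e]; ring
      · have h5 := (hq 0).rpow_const (p := -(5:ℝ) / 2) (Or.inl (hb 0).ne')
        refine HasDerivAt.congr_deriv (((hasDerivAt_id (0:ℝ)).const_mul (-3 * a)).mul h5) ?_
        simp
    simp only [hs, hu0, Finset.sum_const, Finset.card_univ, Fintype.card_fin, Real.one_rpow] at h2
    simp at h2
    linarith
  intro y
  rw [hform2 y, ha1, one_mul]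

/-- Caffarelli–Gidas–Spruck classification in dimension 5, normalized so that
the maximum value `1` is attained at the origin. -/
theorem stmt_19
    (u : EuclideanSpace ℝ (Fin 5) → ℝ)
    (hC2 : ContDiff ℝ 2 u)
    (hpos : ∀ y, 0 < u y)
    (hpde : ∀ y, (∑ i : Fin 5,
        iteratedFDeriv ℝ 2 u y
          ![EuclideanSpace.single i (1 : ℝ), EuclideanSpace.single i (1 : ℝ)])
        = -(15 * u y ^ ((7 : ℝ) / 3)))
    (hu0 : u 0 = 1)
    (hle : ∀ y, u y ≤ 1) :
    ∀ y, u y = (1 + ‖y‖ ^ 2) ^ (-(3 : ℝ) / 2) := by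
  refine cgs_main ⟨hC2, hpos, fun y => ?_, hle⟩ hu0
  rw [← hpde y]
  refine Finset.sum_congr rfl fun i _ => ?_
  rw [iteratedFDeriv_two_apply]
  simp [cgsE]
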